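/- arXiv:2506.07780 — 3 statements merged into one kernel-verified Lean document; each statement's English description precedes it below -/
import Mathlib

section
/- Let v : ℝ → ℝ → ℝ be a smooth function of (x,t) with v_x(x,t) ≠ 0 for all (x,t), satisfying the 3rd potential Kupershmidt equation v_t = v_{5x} - 5·v_{xx}v_{4x}/v_x + 5·v_{xx}²v_{xxx}/v_x². Then the Schwarzian derivative k := v_{xxx}/v_x - (3/2)·(v_{xx}/v_x)² satisfies the k-equation: k_t = k_{5x} + 10kk_{xxx} + 25k_xk_{xx} + 20k²k_x. -/
/-!
Put `w = v_xx / v_x`. The Schwarzian derivative is `k = w_x - w²/2` (Miura map), and the 3rd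
potential Kupershmidt equation takes the form `v_t = v_x F` with `F = k_xx + 4 k²`
(`flow_eq`). Under any flow `v_t = v_x F`, commuting `∂_t` with `∂_x` gives
`w_t = (w F + F_x)_x`, and then `k_t = F_xxx + 2 k F_x + k_x F` (`schwarzian_evolution`).
Inserting `F = k_xx + 4 k²` yields the `k`-equation.

The identities are computed in the commutative ring `ℝ → ℝ → ℝ` (pointwise operations), on whose
smooth elements `dx` and `dt` are commuting derivations.
-/

/-- Total `x`-derivative of a function of `(x, t)`. -/
noncomputable def dx (f : ℝ → ℝ → ℝ) : ℝ → ℝ → ℝ := fun x t => deriv (fun y => f y t) x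

/-- Total `t`-derivative of a function of `(x, t)`. -/
noncomputable def dt (f : ℝ → ℝ → ℝ) : ℝ → ℝ → ℝ := fun x t => deriv (fun s => f x s) t

/-- The `k`-equation. -/
def KEq (k : ℝ → ℝ → ℝ) : Prop :=
  ∀ x t, dt k x t =
    dx (dx (dx (dx (dx k)))) x t
    + 10 * k x t * dx (dx (dx k)) x t
    + 25 * dx k x t * dx (dx k) x t
    + 20 * (k x t)^2 * dx k x t

/-- The 3rd potential Kupershmidt equation. -/
def Kup3 (v : ℝ → ℝ → ℝ) : Prop :=
  ∀ x t, dt v x t =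
    dx (dx (dx (dx (dx v)))) x t
    - 5 * dx (dx v) x t * dx (dx (dx (dx v))) x t / dx v x t
    + 5 * (dx (dx v) x t)^2 * dx (dx (dx v)) x t / (dx v x t)^2

/-- Joint smoothness of a curried function of `(x, t)`. -/
def Smooth2 (f : ℝ → ℝ → ℝ) : Prop := ContDiff ℝ (⊤ : ℕ∞) (fun p : ℝ × ℝ => f p.1 p.2)

namespace Smooth2

variable {f g : ℝ → ℝ → ℝ}

lemma mul (hf : Smooth2 f) (hg : Smooth2 g) : Smooth2 (f * g) := ContDiff.mul hf hg

lemma add (hf : Smooth2 f) (hg : Smooth2 g) : Smooth2 (f + g) := ContDiff.add hf hg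

lemma sub (hf : Smooth2 f) (hg : Smooth2 g) : Smooth2 (f - g) := ContDiff.sub hf hg

lemma smul (c : ℝ) (hf : Smooth2 f) : Smooth2 (c • f) := contDiff_const.mul hf

lemma div (hf : Smooth2 f) (hg : Smooth2 g) (h : ∀ x t, g x t ≠ 0) : Smooth2 (f / g) :=
  ContDiff.div hf hg fun p => h p.1 p.2

lemma diff_x (hf : Smooth2 f) (x t : ℝ) : DifferentiableAt ℝ (fun y => f y t) x :=
  ((ContDiff.comp hf (contDiff_id.prodMk contDiff_const :
    ContDiff ℝ _ fun y : ℝ => (y, t))).differentiable (by simp)) x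

lemma diff_t (hf : Smooth2 f) (x t : ℝ) : DifferentiableAt ℝ (fun s => f x s) t :=
  ((ContDiff.comp hf (contDiff_const.prodMk contDiff_id :
    ContDiff ℝ _ fun s : ℝ => (x, s))).differentiable (by simp)) t

lemma dx_eq_fderiv (hf : Smooth2 f) (x t : ℝ) :
    _root_.dx f x t = fderiv ℝ (fun p : ℝ × ℝ => f p.1 p.2) (x, t) (1, 0) := by
  have h := (ContDiff.differentiable hf (by simp) (x, t)).hasFDerivAt
  exact (h.comp_hasDerivAt x ((hasDerivAt_id x).prodMk (hasDerivAt_const x t))).deriv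

lemma dt_eq_fderiv (hf : Smooth2 f) (x t : ℝ) :
    _root_.dt f x t = fderiv ℝ (fun p : ℝ × ℝ => f p.1 p.2) (x, t) (0, 1) := by
  have h := (ContDiff.differentiable hf (by simp) (x, t)).hasFDerivAt
  exact (h.comp_hasDerivAt t ((hasDerivAt_const t x).prodMk (hasDerivAt_id t))).deriv

lemma fderiv_apply (hf : Smooth2 f) (e : ℝ × ℝ) :
    ContDiff ℝ (⊤ : ℕ∞) fun p => fderiv ℝ (fun p : ℝ × ℝ => f p.1 p.2) p e :=
  (ContDiff.fderiv_right hf (by simp)).clm_apply contDiff_const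

lemma dx (hf : Smooth2 f) : Smooth2 (dx f) := by
  have : (fun p : ℝ × ℝ => _root_.dx f p.1 p.2) = _ := funext fun p => hf.dx_eq_fderiv p.1 p.2
  unfold Smooth2
  rw [this]
  exact hf.fderiv_apply (1, 0)

lemma dt (hf : Smooth2 f) : Smooth2 (dt f) := by
  have : (fun p : ℝ × ℝ => _root_.dt f p.1 p.2) = _ := funext fun p => hf.dt_eq_fderiv p.1 p.2
  unfold Smooth2
  rw [this]
  exact hf.fderiv_apply (0, 1)

/-- Symmetry of the mixed second partial derivatives. -/
lemma dt_dx (hf : Smooth2 f) : _root_.dt (_root_.dx f) = _root_.dx (_root_.dt f) := by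
  funext x t
  have hF : DifferentiableAt ℝ (fderiv ℝ fun p : ℝ × ℝ => f p.1 p.2) (x, t) :=
    (ContDiff.fderiv_right (m := (⊤ : ℕ∞)) hf (by simp)).differentiable (by simp) _
  have hsymm : IsSymmSndFDerivAt ℝ (fun p : ℝ × ℝ => f p.1 p.2) (x, t) :=
    (ContDiff.contDiffAt hf).isSymmSndFDerivAt (by
      rw [minSmoothness_of_isRCLikeNormedField]
      exact WithTop.coe_le_coe.2 (le_top (a := (2 : ℕ∞))))
  rw [hf.dx.dt_eq_fderiv, hf.dt.dx_eq_fderiv,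
    show (fun p : ℝ × ℝ => _root_.dx f p.1 p.2) = _ from
      funext fun p => hf.dx_eq_fderiv p.1 p.2,
    show (fun p : ℝ × ℝ => _root_.dt f p.1 p.2) = _ from
      funext fun p => hf.dt_eq_fderiv p.1 p.2]
  simp only [Prod.mk.eta]
  rw [fderiv_clm_apply hF (by fun_prop), fderiv_clm_apply hF (by fun_prop)]
  simpa using hsymm.eq (0, 1) (1, 0)

lemma dx_mul (hf : Smooth2 f) (hg : Smooth2 g) :
    _root_.dx (f * g) = _root_.dx f * g + f * _root_.dx g :=
  funext₂ fun x t => deriv_fun_mul (hf.diff_x x t) (hg.diff_x x t)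

lemma dx_add (hf : Smooth2 f) (hg : Smooth2 g) :
    _root_.dx (f + g) = _root_.dx f + _root_.dx g :=
  funext₂ fun x t => deriv_fun_add (hf.diff_x x t) (hg.diff_x x t)

lemma dx_sub (hf : Smooth2 f) (hg : Smooth2 g) :
    _root_.dx (f - g) = _root_.dx f - _root_.dx g :=
  funext₂ fun x t => deriv_fun_sub (hf.diff_x x t) (hg.diff_x x t)

lemma dx_smul (c : ℝ) (hf : Smooth2 f) : _root_.dx (c • f) = c • _root_.dx f :=
  funext₂ fun x t => deriv_const_mul c (hf.diff_x x t)

lemma dt_mul (hf : Smooth2 f) (hg : Smooth2 g) :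
    _root_.dt (f * g) = _root_.dt f * g + f * _root_.dt g :=
  funext₂ fun x t => deriv_fun_mul (hf.diff_t x t) (hg.diff_t x t)

lemma dt_sub (hf : Smooth2 f) (hg : Smooth2 g) :
    _root_.dt (f - g) = _root_.dt f - _root_.dt g :=
  funext₂ fun x t => deriv_fun_sub (hf.diff_t x t) (hg.diff_t x t)

lemma dt_smul (c : ℝ) (hf : Smooth2 f) : _root_.dt (c • f) = c • _root_.dt f :=
  funext₂ fun x t => deriv_const_mul c (hf.diff_t x t)

end Smooth2

/-- The Miura map `w ↦ w_x - w²/2`, which sends `v_xx / v_x` to the Schwarzian of `v`. -/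
noncomputable def miura (w : ℝ → ℝ → ℝ) : ℝ → ℝ → ℝ := dx w - (1 / 2 : ℝ) • (w * w)

lemma Smooth2.miura {w : ℝ → ℝ → ℝ} (hw : Smooth2 w) : Smooth2 (miura w) :=
  hw.dx.sub ((hw.mul hw).smul _)

/-- The evolution of the Schwarzian under a flow `v_t = v_x F`; here `a = v_x` and
`w = v_xx / v_x`, so the flow reads `a_t = (a F)_x` and `w` is determined by `a_x = a w`. -/
lemma schwarzian_evolution {a w F : ℝ → ℝ → ℝ} (ha : Smooth2 a) (hw : Smooth2 w)
    (hF : Smooth2 F) (ha0 : ∀ x t, a x t ≠ 0) (hax : dx a = a * w) (hat : dt a = dx (a * F)) :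
    dt (miura w) =
      dx (dx (dx F)) + (2 : ℝ) • (miura w * dx F) + dx (miura w) * F := by
  have hat' : dt a = a * (w * F + dx F) := by
    rw [hat, ha.dx_mul hF, hax]; ring
  have hG : Smooth2 (w * F + dx F) := (hw.mul hF).add hF.dx
  -- Compare the two expressions for `a_xt` and cancel the factor `a`.
  have hwt : dt w = dx w * F + w * dx F + dx (dx F) := by
    have h := ha.dt_dx
    rw [hat', hax, ha.dt_mul hw, ha.dx_mul hG, (hw.mul hF).dx_add hF.dx, hw.dx_mul hF, hat',
      hax] at h
    funext x t
    have h' := congrFun₂ h x t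
    simp only [Pi.add_apply, Pi.mul_apply] at h' ⊢
    apply mul_left_cancel₀ (ha0 x t)
    linear_combination h'
  have e1 := hw.dx.mul hF
  have e2 := hw.mul hF.dx
  rw [miura, hw.dx.dt_sub ((hw.mul hw).smul _), (hw.mul hw).dt_smul, hw.dt_mul hw, hw.dt_dx,
    hwt, (e1.add e2).dx_add hF.dx.dx, e1.dx_add e2, hw.dx.dx_mul hF, hw.dx_mul hF.dx,
    hw.dx.dx_sub ((hw.mul hw).smul _), (hw.mul hw).dx_smul, hw.dx_mul hw]
  funext x t
  simp only [Pi.add_apply, Pi.sub_apply, Pi.mul_apply, Pi.smul_apply, smul_eq_mul]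
  ring

/-- The right-hand side of the 3rd potential Kupershmidt equation is `v_x (k_xx + 4 k²)`. -/
lemma flow_eq {v w : ℝ → ℝ → ℝ} (hw : Smooth2 w) (hv : Smooth2 v) (hv0 : ∀ x t, dx v x t ≠ 0)
    (hvw : dx (dx v) = dx v * w) (heq : Kup3 v) :
    dt v = dx v * (dx (dx (miura w)) + (4 : ℝ) • (miura w * miura w)) := by
  have ha := hv.dx
  have hww := hw.mul hw
  have h3 : dx (dx (dx v)) = dx v * (dx w + w * w) := by
    rw [hvw, ha.dx_mul hw, hvw]; ring
  have h4 : dx (dx (dx (dx v))) =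
      dx v * (w * (dx w + w * w) + (dx (dx w) + (dx w * w + w * dx w))) := by
    rw [h3, ha.dx_mul (hw.dx.add hww), hvw, hw.dx.dx_add hww, hw.dx_mul hw]; ring
  have h5 : dx (dx (dx (dx (dx v)))) =
      dx v * (w * (w * (dx w + w * w) + (dx (dx w) + (dx w * w + w * dx w)))
        + (dx w * (dx w + w * w) + w * (dx (dx w) + (dx w * w + w * dx w))
          + (dx (dx (dx w)) + (dx (dx w) * w + dx w * dx w + (dx w * dx w + w * dx (dx w)))))) := by
    have e1 := hw.mul (hw.dx.add hww)
    have e2 := (hw.dx.mul hw).add (hw.mul hw.dx)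
    rw [h4, ha.dx_mul (e1.add (hw.dx.dx.add e2)), hvw, e1.dx_add (hw.dx.dx.add e2),
      hw.dx_mul (hw.dx.add hww), hw.dx.dx_add hww, hw.dx_mul hw, hw.dx.dx.dx_add e2,
      (hw.dx.mul hw).dx_add (hw.mul hw.dx), hw.dx.dx_mul hw, hw.dx_mul hw.dx]
    ring
  have hk : dx (dx (miura w)) =
      dx (dx (dx w)) - (1 / 2 : ℝ) •
        (dx (dx w) * w + dx w * dx w + (dx w * dx w + w * dx (dx w))) := by
    rw [miura, hw.dx.dx_sub (hww.smul _), hww.dx_smul, hw.dx_mul hw,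
      hw.dx.dx.dx_sub (((hw.dx.mul hw).add (hw.mul hw.dx)).smul _),
      ((hw.dx.mul hw).add (hw.mul hw.dx)).dx_smul,
      (hw.dx.mul hw).dx_add (hw.mul hw.dx), hw.dx.dx_mul hw, hw.dx_mul hw.dx]
  funext x t
  rw [heq x t, h5, h4, h3, hvw, hk, miura]
  simp only [Pi.add_apply, Pi.sub_apply, Pi.mul_apply, Pi.smul_apply, smul_eq_mul]
  have := hv0 x t
  field_simp
  ring

/-- The Schwarzian derivative `k = {v, x}` of a solution of the 3rd potential
Kupershmidt equation solves the `k`-equation. -/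
theorem schwarzian_solves_k_equation
    (v : ℝ → ℝ → ℝ)
    (hv : ContDiff ℝ (⊤ : ℕ∞) (fun p : ℝ × ℝ => v p.1 p.2))
    (hvx : ∀ x t, dx v x t ≠ 0)
    (heq : Kup3 v) :
    KEq (fun x t => dx (dx (dx v)) x t / dx v x t
      - (3/2) * (dx (dx v) x t / dx v x t)^2) := by
  have hv : Smooth2 v := hv
  obtain ⟨w, hw, hvw⟩ : ∃ w, Smooth2 w ∧ dx (dx v) = dx v * w := by
    refine ⟨dx (dx v) / dx v, hv.dx.dx.div hv.dx hvx, ?_⟩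
    funext x t
    exact (mul_div_cancel₀ _ (hvx x t)).symm
  have hk : (fun x t => dx (dx (dx v)) x t / dx v x t
      - (3/2) * (dx (dx v) x t / dx v x t)^2) = miura w := by
    funext x t
    have := hvx x t
    rw [hvw, hv.dx.dx_mul hw, hvw, miura]
    simp only [Pi.add_apply, Pi.sub_apply, Pi.mul_apply, Pi.smul_apply, smul_eq_mul]
    field_simp
    ring
  rw [hk]
  have hflow := flow_eq hw hv hvx hvw heq
  have hks := hw.miura
  have hkk := hks.mul hks
  have hev := schwarzian_evolution hv.dx hw (hks.dx.dx.add (hkk.smul 4)) hvx hvw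
    (by rw [hv.dt_dx, hflow])
  generalize miura w = k at *
  have e := (hks.dx.mul hks).add (hks.mul hks.dx)
  have e1 := hks.dx.dx.mul hks
  have e2 := hks.dx.mul hks.dx
  have e3 := hks.mul hks.dx.dx
  rw [hks.dx.dx.dx_add (hkk.smul 4), hkk.dx_smul, hks.dx_mul hks,
    hks.dx.dx.dx.dx_add (e.smul 4), e.dx_smul, (hks.dx.mul hks).dx_add (hks.mul hks.dx),
    hks.dx.dx_mul hks, hks.dx_mul hks.dx,
    hks.dx.dx.dx.dx.dx_add (((e1.add e2).add (e2.add e3)).smul 4),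
    ((e1.add e2).add (e2.add e3)).dx_smul, (e1.add e2).dx_add (e2.add e3), e1.dx_add e2,
    e2.dx_add e3, hks.dx.dx.dx_mul hks, hks.dx.dx_mul hks.dx, hks.dx_mul hks.dx.dx] at hev
  intro x t
  rw [hev]
  simp only [Pi.add_apply, Pi.mul_apply, Pi.smul_apply, smul_eq_mul]
  ring
end

section
/- Let K : ℝ → ℝ → ℝ be a smooth function of (x,t) satisfying the Kupershmidt equation K_t = K_{5x} - 5K_xK_{xxx} - 5K_{xx}² - 5K²K_{xxx} - 20KK_xK_{xx} - 5K_x³ + 5K⁴K_x. Then S := K_x - K² satisfies the Sawada-Kotera equation S_t = S_{5x} + 5SS_{xxx} + 5S_xS_{xx} + 5S²S_x. -/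
/-- The Kupershmidt equation. -/
def Kupershmidt (K : ℝ → ℝ → ℝ) : Prop :=
  ∀ x t, dt K x t =
    dx (dx (dx (dx (dx K)))) x t
    - 5 * dx K x t * dx (dx (dx K)) x t
    - 5 * (dx (dx K) x t)^2
    - 5 * (K x t)^2 * dx (dx (dx K)) x t
    - 20 * K x t * dx K x t * dx (dx K) x t
    - 5 * (dx K x t)^3
    + 5 * (K x t)^4 * dx K x t

/-- The Sawada-Kotera equation. -/
def SawadaKotera (S : ℝ → ℝ → ℝ) : Prop :=
  ∀ x t, dt S x t =
    dx (dx (dx (dx (dx S)))) x t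
    + 5 * S x t * dx (dx (dx S)) x t
    + 5 * dx S x t * dx (dx S) x t
    + 5 * (S x t)^2 * dx S x t

/-- Joint smoothness of a function of `(x, t)`. -/
def SmoothXT (f : ℝ → ℝ → ℝ) : Prop :=
  ContDiff ℝ (⊤ : ℕ∞) (fun p : ℝ × ℝ => f p.1 p.2)

lemma SmoothXT.hasFDerivAt {f : ℝ → ℝ → ℝ} (hf : SmoothXT f) (p : ℝ × ℝ) :
    HasFDerivAt (fun p : ℝ × ℝ => f p.1 p.2) (fderiv ℝ (fun p : ℝ × ℝ => f p.1 p.2) p) p :=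
  (ContDiff.differentiable hf (by simp) p).hasFDerivAt

lemma SmoothXT.hasDerivAt_fderiv_x {f : ℝ → ℝ → ℝ} (hf : SmoothXT f) (x t : ℝ) :
    HasDerivAt (fun y => f y t) (fderiv ℝ (fun p : ℝ × ℝ => f p.1 p.2) (x, t) (1, 0)) x :=
  HasFDerivAt.comp_hasDerivAt (f := fun y => (y, t)) x (hf.hasFDerivAt (x, t))
    ((hasDerivAt_id x).prodMk (hasDerivAt_const x t))

lemma SmoothXT.hasDerivAt_fderiv_t {f : ℝ → ℝ → ℝ} (hf : SmoothXT f) (x t : ℝ) :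
    HasDerivAt (fun s => f x s) (fderiv ℝ (fun p : ℝ × ℝ => f p.1 p.2) (x, t) (0, 1)) t :=
  HasFDerivAt.comp_hasDerivAt (f := fun s => (x, s)) t (hf.hasFDerivAt (x, t))
    ((hasDerivAt_const t x).prodMk (hasDerivAt_id t))

lemma SmoothXT.hasDerivAt_dx {f : ℝ → ℝ → ℝ} (hf : SmoothXT f) (x t : ℝ) :
    HasDerivAt (fun y => f y t) (dx f x t) x :=
  (hf.hasDerivAt_fderiv_x x t).differentiableAt.hasDerivAt

lemma SmoothXT.hasDerivAt_dt {f : ℝ → ℝ → ℝ} (hf : SmoothXT f) (x t : ℝ) :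
    HasDerivAt (fun s => f x s) (dt f x t) t :=
  (hf.hasDerivAt_fderiv_t x t).differentiableAt.hasDerivAt

lemma SmoothXT.contDiff_fderiv {f : ℝ → ℝ → ℝ} (hf : SmoothXT f) :
    ContDiff ℝ (⊤ : ℕ∞) (fderiv ℝ (fun p : ℝ × ℝ => f p.1 p.2)) :=
  ContDiff.fderiv_right hf (by simp)

lemma SmoothXT.dx {f : ℝ → ℝ → ℝ} (hf : SmoothXT f) : SmoothXT (dx f) := by
  have h : (fun p : ℝ × ℝ => _root_.dx f p.1 p.2)
      = fun p => fderiv ℝ (fun p : ℝ × ℝ => f p.1 p.2) p (1, 0) :=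
    funext fun p => (hf.hasDerivAt_fderiv_x p.1 p.2).deriv
  unfold SmoothXT
  rw [h]
  exact hf.contDiff_fderiv.clm_apply contDiff_const

/-- Equality of mixed partial derivatives, from the symmetry of the second Fréchet derivative. -/
lemma dt_dx_comm {f : ℝ → ℝ → ℝ} (hf : SmoothXT f) (x t : ℝ) :
    dt (dx f) x t = dx (dt f) x t := by
  have hx : dx f = fun x t => fderiv ℝ (fun p : ℝ × ℝ => f p.1 p.2) (x, t) (1, 0) :=
    funext fun x => funext fun t => (hf.hasDerivAt_fderiv_x x t).deriv
  have ht : dt f = fun x t => fderiv ℝ (fun p : ℝ × ℝ => f p.1 p.2) (x, t) (0, 1) :=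
    funext fun x => funext fun t => (hf.hasDerivAt_fderiv_t x t).deriv
  have h2 := (hf.contDiff_fderiv.differentiable (by simp) (x, t)).hasFDerivAt
  have hsymm := second_derivative_symmetric hf.hasFDerivAt h2 (1, 0) (0, 1)
  have e1 := ((HasFDerivAt.comp_hasDerivAt (f := fun s => (x, s)) t h2
    ((hasDerivAt_const t x).prodMk (hasDerivAt_id t))).clm_apply
      (hasDerivAt_const t ((1, 0) : ℝ × ℝ))).deriv
  have e2 := ((HasFDerivAt.comp_hasDerivAt (f := fun y => (y, t)) x h2
    ((hasDerivAt_id x).prodMk (hasDerivAt_const x t))).clm_apply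
      (hasDerivAt_const x ((0, 1) : ℝ × ℝ))).deriv
  rw [hx, ht]
  simp only [map_zero, add_zero] at e1 e2
  exact e1.trans (hsymm.symm.trans e2.symm)

/-- The Miura transformation `S = K_x - K²` maps the Kupershmidt equation to the
Sawada-Kotera equation. -/
theorem miura_kupershmidt_to_sawada_kotera
    (K : ℝ → ℝ → ℝ)
    (hK : ContDiff ℝ (⊤ : ℕ∞) (fun p : ℝ × ℝ => K p.1 p.2))
    (heq : Kupershmidt K) :
    SawadaKotera (fun x t => dx K x t - (K x t)^2) := by
  have s0 : SmoothXT K := hK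
  have d0 := s0.hasDerivAt_dx
  have d1 := s0.dx.hasDerivAt_dx
  have d2 := s0.dx.dx.hasDerivAt_dx
  have d3 := s0.dx.dx.dx.hasDerivAt_dx
  have d4 := s0.dx.dx.dx.dx.hasDerivAt_dx
  have d5 := s0.dx.dx.dx.dx.dx.hasDerivAt_dx
  have t0 := s0.hasDerivAt_dt
  have t1 := s0.dx.hasDerivAt_dt
  have hcomm := dt_dx_comm s0
  have hdt : dt K = _ := funext fun x => funext fun t => heq x t
  rw [hdt] at hcomm
  unfold Kupershmidt at heq
  generalize dx (dx (dx (dx (dx (dx K))))) = k6 at *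
  generalize dx (dx (dx (dx (dx K)))) = k5 at *
  generalize dx (dx (dx (dx K))) = k4 at *
  generalize dx (dx (dx K)) = k3 at *
  generalize dx (dx K) = k2 at *
  generalize dx K = k1 at *
  have S1 : dx (fun x t => k1 x t - (K x t)^2) = fun x t => k2 x t - 2 * (K x t * k1 x t) := by
    funext x t
    refine (((d1 x t).sub ((d0 x t).pow 2)).congr_deriv ?_).deriv
    push_cast; ring
  have S2 : dx (fun x t => k2 x t - 2 * (K x t * k1 x t))
      = fun x t => k3 x t - 2 * (k1 x t)^2 - 2 * (K x t * k2 x t) := by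
    funext x t
    refine (((d2 x t).sub (((d0 x t).mul (d1 x t)).const_mul 2)).congr_deriv ?_).deriv
    ring
  have S3 : dx (fun x t => k3 x t - 2 * (k1 x t)^2 - 2 * (K x t * k2 x t))
      = fun x t => k4 x t - 6 * (k1 x t * k2 x t) - 2 * (K x t * k3 x t) := by
    funext x t
    refine ((((d3 x t).sub (((d1 x t).pow 2).const_mul 2)).sub
      (((d0 x t).mul (d2 x t)).const_mul 2)).congr_deriv ?_).deriv
    push_cast; ring
  have S4 : dx (fun x t => k4 x t - 6 * (k1 x t * k2 x t) - 2 * (K x t * k3 x t))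
      = fun x t => k5 x t - 6 * (k2 x t)^2 - 8 * (k1 x t * k3 x t) - 2 * (K x t * k4 x t) := by
    funext x t
    refine ((((d4 x t).sub (((d1 x t).mul (d2 x t)).const_mul 6)).sub
      (((d0 x t).mul (d3 x t)).const_mul 2)).congr_deriv ?_).deriv
    ring
  have S5 : dx (fun x t => k5 x t - 6 * (k2 x t)^2 - 8 * (k1 x t * k3 x t) - 2 * (K x t * k4 x t))
      = fun x t => k6 x t - 20 * (k2 x t * k3 x t) - 10 * (k1 x t * k4 x t)
        - 2 * (K x t * k5 x t) := by
    funext x t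
    refine (((((d5 x t).sub (((d2 x t).pow 2).const_mul 6)).sub
      (((d1 x t).mul (d3 x t)).const_mul 8)).sub
      (((d0 x t).mul (d4 x t)).const_mul 2)).congr_deriv ?_).deriv
    push_cast; ring
  intro x t
  have hS : dt (fun x t => k1 x t - (K x t)^2) x t = dt k1 x t - 2 * (K x t * dt K x t) := by
    refine (((t1 x t).sub ((t0 x t).pow 2)).congr_deriv ?_).deriv
    push_cast; ring
  -- The `x`-derivative of the right-hand side of the Kupershmidt equation, left unsimplified.
  have hR := ((((((((d5 x t).sub (((d1 x t).const_mul 5).mul (d3 x t))).sub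
    (((d2 x t).pow 2).const_mul 5)).sub
    ((((d0 x t).pow 2).const_mul 5).mul (d3 x t))).sub
    ((((d0 x t).const_mul 20).mul (d1 x t)).mul (d2 x t))).sub
    (((d1 x t).pow 3).const_mul 5)).add
    ((((d0 x t).pow 4).const_mul 5).mul (d1 x t)))).deriv
  rw [S1, S2, S3, S4, S5, hS, (hcomm x t).trans hR, heq x t]
  simp only [Pi.mul_apply, Pi.pow_apply]
  push_cast
  ring
end

section
/- Let β ≠ 0 be a real constant and let v : ℝ → ℝ → ℝ be a smooth function of (x,t) with v(x,t) ≠ 0 and v_x(x,t) ≠ 0 for all (x,t), satisfying the 3rd potential Kupershmidt equation v_t = v_{5x} - 5·v_{xx}v_{4x}/v_x + 5·v_{xx}²v_{xxx}/v_x². Then h := -(β/6)·v²·v_x^{-2} satisfies h_t = ∂_x[ h_{4x} - 5·h_xh_{xxx}/h - (15/4)·h_{xx}²/h + (65/4)·h_x²h_{xx}/h² - (135/16)·h_x⁴/h³ + (5β/6)·(h_{xx}/h - (7/4)·h_x²/h²) - (5β²/36)·(1/h) ], where ∂_x denotes the partial derivative with respect to x of the bracketed expression. -/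
open scoped ContDiff

/-- Joint smoothness of a curried function of `(x, t)`. -/
def JointSmooth (f : ℝ → ℝ → ℝ) : Prop := ContDiff ℝ ∞ (fun p : ℝ × ℝ => f p.1 p.2)

namespace JointSmooth

variable {f g : ℝ → ℝ → ℝ}

theorem hasDerivAt_fst (hf : JointSmooth f) (x t : ℝ) :
    HasDerivAt (fun y => f y t) (fderiv ℝ (fun p : ℝ × ℝ => f p.1 p.2) (x, t) (1, 0)) x := by
  have h1 : HasFDerivAt (fun p : ℝ × ℝ => f p.1 p.2) _ (x, t) :=
    (ContDiff.differentiable hf (by simp) (x, t)).hasFDerivAt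
  have h2 : HasDerivAt (fun y : ℝ => (y, t)) ((1 : ℝ), (0 : ℝ)) x :=
    (hasDerivAt_id x).prodMk (hasDerivAt_const x t)
  exact h1.comp_hasDerivAt x h2

theorem hasDerivAt_snd (hf : JointSmooth f) (x t : ℝ) :
    HasDerivAt (fun s => f x s) (fderiv ℝ (fun p : ℝ × ℝ => f p.1 p.2) (x, t) (0, 1)) t := by
  have h1 : HasFDerivAt (fun p : ℝ × ℝ => f p.1 p.2) _ (x, t) :=
    (ContDiff.differentiable hf (by simp) (x, t)).hasFDerivAt
  have h2 : HasDerivAt (fun s : ℝ => (x, s)) ((0 : ℝ), (1 : ℝ)) t :=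
    (hasDerivAt_const t x).prodMk (hasDerivAt_id t)
  exact h1.comp_hasDerivAt t h2

theorem dx_eq (hf : JointSmooth f) (x t : ℝ) :
    dx f x t = fderiv ℝ (fun p : ℝ × ℝ => f p.1 p.2) (x, t) (1, 0) :=
  (hf.hasDerivAt_fst x t).deriv

theorem dt_eq (hf : JointSmooth f) (x t : ℝ) :
    dt f x t = fderiv ℝ (fun p : ℝ × ℝ => f p.1 p.2) (x, t) (0, 1) :=
  (hf.hasDerivAt_snd x t).deriv

theorem hasDerivAt_dx (hf : JointSmooth f) (x t : ℝ) :
    HasDerivAt (fun y => f y t) (dx f x t) x := by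
  rw [hf.dx_eq]; exact hf.hasDerivAt_fst x t

theorem hasDerivAt_dt (hf : JointSmooth f) (x t : ℝ) :
    HasDerivAt (fun s => f x s) (dt f x t) t := by
  rw [hf.dt_eq]; exact hf.hasDerivAt_snd x t

theorem contDiff_fderiv (hf : JointSmooth f) :
    ContDiff ℝ ∞ (fderiv ℝ (fun p : ℝ × ℝ => f p.1 p.2)) :=
  ContDiff.fderiv_right hf (by simp)

theorem dx (hf : JointSmooth f) : JointSmooth (dx f) := by
  have h : (fun p : ℝ × ℝ => _root_.dx f p.1 p.2) =
      fun p => fderiv ℝ (fun p : ℝ × ℝ => f p.1 p.2) p (1, 0) :=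
    funext fun p => hf.dx_eq p.1 p.2
  unfold JointSmooth
  rw [h]
  exact hf.contDiff_fderiv.clm_apply contDiff_const

theorem dt (hf : JointSmooth f) : JointSmooth (dt f) := by
  have h : (fun p : ℝ × ℝ => _root_.dt f p.1 p.2) =
      fun p => fderiv ℝ (fun p : ℝ × ℝ => f p.1 p.2) p (0, 1) :=
    funext fun p => hf.dt_eq p.1 p.2
  unfold JointSmooth
  rw [h]
  exact hf.contDiff_fderiv.clm_apply contDiff_const

theorem div (hf : JointSmooth f) (hg : JointSmooth g) (h0 : ∀ x t, g x t ≠ 0) :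
    JointSmooth (fun x t => f x t / g x t) :=
  ContDiff.div hf hg fun p => h0 p.1 p.2

theorem dt_dx (hf : JointSmooth f) (x t : ℝ) :
    _root_.dt (_root_.dx f) x t = _root_.dx (_root_.dt f) x t := by
  have hd : DifferentiableAt ℝ (fderiv ℝ (fun p : ℝ × ℝ => f p.1 p.2)) (x, t) :=
    hf.contDiff_fderiv.differentiable (by simp) _
  have h1 : (fun p : ℝ × ℝ => _root_.dx f p.1 p.2) =
      fun p => fderiv ℝ (fun p : ℝ × ℝ => f p.1 p.2) p (1, 0) :=
    funext fun p => hf.dx_eq p.1 p.2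
  have h2 : (fun p : ℝ × ℝ => _root_.dt f p.1 p.2) =
      fun p => fderiv ℝ (fun p : ℝ × ℝ => f p.1 p.2) p (0, 1) :=
    funext fun p => hf.dt_eq p.1 p.2
  have hs : IsSymmSndFDerivAt ℝ (fun p : ℝ × ℝ => f p.1 p.2) (x, t) :=
    (ContDiff.contDiffAt hf).isSymmSndFDerivAt (by
      rw [minSmoothness_of_isRCLikeNormedField]
      exact WithTop.coe_le_coe.2 (le_top : (2 : ℕ∞) ≤ ⊤))
  rw [hf.dx.dt_eq, hf.dt.dx_eq, h1, h2,
    fderiv_clm_apply hd (differentiableAt_const _), fderiv_clm_apply hd (differentiableAt_const _)]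
  simpa using hs.eq (0, 1) (1, 0)

end JointSmooth

/-- The numerator `N₄` in `v_{4x} = v N₄ / r⁴`, for `v_x = v / r` and `rᵢ = ∂ₓⁱ r`. -/
def jetNum4 (r r1 r2 r3 : ℝ) : ℝ :=
  (1 - r1) * (1 - 2 * r1) * (1 - 3 * r1) - r * r2 * (4 - 6 * r1) - r ^ 2 * r3

/-- The numerator `N₅` in `v_{5x} = v N₅ / r⁵`, for `v_x = v / r` and `rᵢ = ∂ₓⁱ r`. -/
def jetNum5 (r r1 r2 r3 r4 : ℝ) : ℝ :=
  r * (-(r2 * (1 - 2 * r1) * (1 - 3 * r1)) - 2 * r2 * ((1 - r1) * (1 - 3 * r1))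
      - 3 * r2 * ((1 - r1) * (1 - 2 * r1))
      - (r1 * r2 + r * r3) * (4 - 6 * r1) + 6 * r * r2 ^ 2 - 2 * r * r1 * r3 - r ^ 2 * r4)
    + (1 - 4 * r1) * jetNum4 r r1 r2 r3

/-- The quotient `v_t / v` prescribed by the 3rd potential Kupershmidt equation, as a function of
the jet of `r = v / v_x`. -/
noncomputable def flux (r r1 r2 r3 r4 : ℝ) : ℝ :=
  (jetNum5 r r1 r2 r3 r4 - 5 * (1 - r1) * jetNum4 r r1 r2 r3
    + 5 * (1 - r1) ^ 2 * ((1 - r1) * (1 - 2 * r1) - r * r2)) / r ^ 5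

/-- The right-hand side of the 4th potential Kupershmidt equation at `w_x = c r²`, `β = -6c`,
divided by `c`. -/
noncomputable def bracket (r r1 r2 r3 r4 : ℝ) : ℝ :=
  2 * r * r4 - 12 * r1 * r3 - 9 * r2 ^ 2 + 40 * r1 ^ 2 * r2 / r - 20 * r1 ^ 4 / r ^ 2
    - 10 * r2 / r + 25 * r1 ^ 2 / r ^ 2 - 5 / r ^ 2

/-- The conservation-law identity `∂ₓ bracket = -2 r³ ∂ₓ flux`. -/
theorem deriv_bracket_eq {r r1 r2 r3 r4 : ℝ → ℝ} {r5 x : ℝ} (hr : r x ≠ 0)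
    (d0 : HasDerivAt r (r1 x) x) (d1 : HasDerivAt r1 (r2 x) x) (d2 : HasDerivAt r2 (r3 x) x)
    (d3 : HasDerivAt r3 (r4 x) x) (d4 : HasDerivAt r4 r5 x) :
    deriv (fun y => bracket (r y) (r1 y) (r2 y) (r3 y) (r4 y)) x =
      -2 * r x ^ 3 * deriv (fun y => flux (r y) (r1 y) (r2 y) (r3 y) (r4 y)) x := by
  have hB : HasDerivAt (fun y => bracket (r y) (r1 y) (r2 y) (r3 y) (r4 y)) _ x :=
    (((((((((d0.const_mul 2).mul d4).sub ((d1.const_mul 12).mul d3)).sub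
      ((d2.pow 2).const_mul 9)).add ((((d1.pow 2).const_mul 40).mul d2).div d0 hr)).sub
      (((d1.pow 4).const_mul 20).div (d0.pow 2) (pow_ne_zero 2 hr))).sub
      ((d2.const_mul 10).div d0 hr)).add
      (((d1.pow 2).const_mul 25).div (d0.pow 2) (pow_ne_zero 2 hr)))).sub
      ((hasDerivAt_const x (5 : ℝ)).div (d0.pow 2) (pow_ne_zero 2 hr))
  have e1 := d1.const_sub 1
  have e2 := (d1.const_mul 2).const_sub 1
  have e3 := (d1.const_mul 3).const_sub 1
  have e4 := (d1.const_mul 4).const_sub 1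
  have e6 := (d1.const_mul 6).const_sub 4
  have hN4 : HasDerivAt (fun y => jetNum4 (r y) (r1 y) (r2 y) (r3 y)) _ x :=
    (((e1.mul e2).mul e3).sub ((d0.mul d2).mul e6)).sub ((d0.pow 2).mul d3)
  have hN5 : HasDerivAt (fun y => jetNum5 (r y) (r1 y) (r2 y) (r3 y) (r4 y)) _ x :=
    (d0.mul (((((((((d2.mul e2).mul e3).neg).sub ((d2.const_mul 2).mul (e1.mul e3))).sub
      ((d2.const_mul 3).mul (e1.mul e2))).sub (((d1.mul d2).add (d0.mul d3)).mul e6)).add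
      ((d0.const_mul 6).mul (d2.pow 2))).sub (((d0.const_mul 2).mul d1).mul d3)).sub
      ((d0.pow 2).mul d4))).add (e4.mul hN4)
  have hF : HasDerivAt (fun y => flux (r y) (r1 y) (r2 y) (r3 y) (r4 y)) _ x :=
    ((hN5.sub ((e1.const_mul 5).mul hN4)).add
      (((e1.pow 2).const_mul 5).mul ((e1.mul e2).sub (d0.mul d2)))).div (d0.pow 5)
      (pow_ne_zero 5 hr)
  rw [hB.deriv, hF.deriv]
  simp only [jetNum5, jetNum4, Pi.mul_apply, Pi.sub_apply, Pi.add_apply, Pi.pow_apply,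
    Pi.neg_apply]
  field_simp
  ring

/-- If `v` solves the 3rd potential Kupershmidt equation, then `h = -(β/6)v²v_x^{-2}`
solves the `x`-differentiated 4th potential Kupershmidt equation. -/
theorem kup3_to_kup4_potentialisation
    (β : ℝ) (hβ : β ≠ 0)
    (v : ℝ → ℝ → ℝ)
    (hv : ContDiff ℝ (⊤ : ℕ∞) (fun p : ℝ × ℝ => v p.1 p.2))
    (hne : ∀ x t, v x t ≠ 0)
    (hvx : ∀ x t, dx v x t ≠ 0)
    (heq : Kup3 v)
    (h : ℝ → ℝ → ℝ)
    (hh : ∀ x t, h x t = -(β/6) * (v x t)^2 * (dx v x t) ^ (-2 : ℤ)) :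
    ∀ x t, dt h x t =
      dx (fun x t =>
        dx (dx (dx (dx h))) x t
        - 5 * dx h x t * dx (dx (dx h)) x t / h x t
        - (15/4) * (dx (dx h) x t)^2 / h x t
        + (65/4) * (dx h x t)^2 * dx (dx h) x t / (h x t)^2
        - (135/16) * (dx h x t)^4 / (h x t)^3
        + (5*β/6) * (dx (dx h) x t / h x t - (7/4) * (dx h x t)^2 / (h x t)^2)
        - (5*β^2/36) * (1 / h x t)) x t := by
  have sv : JointSmooth v := hv
  have sr : JointSmooth (fun x t => v x t / dx v x t) := sv.div sv.dx hvx
  obtain ⟨r, hr⟩ : ∃ r : ℝ → ℝ → ℝ, r = fun x t => v x t / dx v x t := ⟨_, rfl⟩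
  rw [← hr] at sr
  have r0 : ∀ x t, r x t ≠ 0 := fun x t => by rw [hr]; exact div_ne_zero (hne x t) (hvx x t)
  have v1 : dx v = fun x t => v x t / r x t := by
    funext x t
    have := hne x t
    have := hvx x t
    rw [hr]; field_simp
  have dv : ∀ x t, HasDerivAt (fun y => v y t) (v x t / r x t) x := fun x t => by
    have := sv.hasDerivAt_dx x t
    rwa [v1] at this
  have d0 := sr.hasDerivAt_dx
  have d1 := sr.dx.hasDerivAt_dx
  have d2 := sr.dx.dx.hasDerivAt_dx
  have d3 := sr.dx.dx.dx.hasDerivAt_dx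
  have d4 := sr.dx.dx.dx.dx.hasDerivAt_dx
  generalize hr5 : dx (dx (dx (dx (dx r)))) = r5 at d4
  generalize hr4 : dx (dx (dx (dx r))) = r4 at d3 d4
  generalize hr3 : dx (dx (dx r)) = r3 at d2 d3
  generalize hr2 : dx (dx r) = r2 at d1 d2
  generalize hr1 : dx r = r1 at d0 d1
  -- the `x`-jet of `v` in terms of the jet of `r`
  have v2 : dx (dx v) = fun x t => v x t * (1 - r1 x t) / r x t ^ 2 := by
    rw [v1]; funext x t
    have := r0 x t
    refine ((dv x t).div (d0 x t) this).deriv.trans ?_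
    field_simp
  have v3 : dx (dx (dx v)) = fun x t =>
      v x t * ((1 - r1 x t) * (1 - 2 * r1 x t) - r x t * r2 x t) / r x t ^ 3 := by
    rw [v2]; funext x t
    have := r0 x t
    refine (((dv x t).mul ((d1 x t).const_sub 1)).div ((d0 x t).pow 2)
      (pow_ne_zero 2 this)).deriv.trans ?_
    simp only [Pi.mul_apply, Pi.pow_apply]
    field_simp
    ring
  have v4 : dx (dx (dx (dx v))) = fun x t =>
      v x t * jetNum4 (r x t) (r1 x t) (r2 x t) (r3 x t) / r x t ^ 4 := by
    rw [v3]; funext x t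
    have := r0 x t
    refine (((dv x t).mul ((((d1 x t).const_sub 1).mul (((d1 x t).const_mul 2).const_sub 1)).sub
      ((d0 x t).mul (d2 x t)))).div ((d0 x t).pow 3) (pow_ne_zero 3 this)).deriv.trans ?_
    simp only [jetNum4, Pi.mul_apply, Pi.pow_apply, Pi.sub_apply]
    field_simp
    ring
  have v5 : dx (dx (dx (dx (dx v)))) = fun x t =>
      v x t * jetNum5 (r x t) (r1 x t) (r2 x t) (r3 x t) (r4 x t) / r x t ^ 5 := by
    rw [v4]; funext x t
    have := r0 x t
    have e1 := (d1 x t).const_sub 1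
    have e2 := ((d1 x t).const_mul 2).const_sub 1
    have e3 := ((d1 x t).const_mul 3).const_sub 1
    have e6 := ((d1 x t).const_mul 6).const_sub 4
    have hN4 : HasDerivAt (fun y => jetNum4 (r y t) (r1 y t) (r2 y t) (r3 y t)) _ x :=
      (((e1.mul e2).mul e3).sub (((d0 x t).mul (d2 x t)).mul e6)).sub
        (((d0 x t).pow 2).mul (d3 x t))
    refine (((dv x t).mul hN4).div ((d0 x t).pow 4) (pow_ne_zero 4 this)).deriv.trans ?_
    simp only [jetNum5, jetNum4, Pi.mul_apply, Pi.pow_apply]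
    field_simp
    ring
  have vt : ∀ x t, dt v x t / v x t =
      flux (r x t) (r1 x t) (r2 x t) (r3 x t) (r4 x t) := fun x t => by
    have := r0 x t
    have := hne x t
    rw [heq x t, v5, v4, v3, v2, v1]
    simp only [flux]
    field_simp
  have sF : JointSmooth (fun x t => dt v x t / v x t) := sv.dt.div sv hne
  obtain ⟨F, hF⟩ : ∃ F : ℝ → ℝ → ℝ, F = fun x t => dt v x t / v x t := ⟨_, rfl⟩
  rw [← hF] at sF
  have vtF : dt v = fun x t => v x t * F x t := by
    funext x t
    have := hne x t
    rw [hF]; field_simp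
  have rt : ∀ x t, dt r x t = -r x t ^ 2 * dx F x t := fun x t => by
    have hr0 := r0 x t
    have hv0 := hne x t
    have hvxt : dt (dx v) x t = v x t / r x t * F x t + v x t * dx F x t := by
      rw [sv.dt_dx, vtF]
      exact ((dv x t).mul (sF.hasDerivAt_dx x t)).deriv
    have h1 : dt r x t =
        (dt v x t * dx v x t - v x t * dt (dx v) x t) / dx v x t ^ 2 := by
      rw [hr]
      exact ((sv.hasDerivAt_dt x t).div (sv.dx.hasDerivAt_dt x t) (hvx x t)).deriv
    rw [h1, hvxt, vtF, v1]
    field_simp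
    ring
  obtain ⟨c, hc⟩ : ∃ c : ℝ, c = -(β / 6) := ⟨_, rfl⟩
  have hβc : β = -6 * c := by rw [hc]; ring
  have c0 : c ≠ 0 := fun h0 => hβ (by rw [hβc, h0]; ring)
  -- the `x`-jet of `h` in terms of the jet of `r`
  have h0 : h = fun x t => c * r x t ^ 2 := by
    funext x t
    have := hvx x t
    rw [hh, hr, hc, zpow_neg]
    norm_cast
    field_simp
  have h1 : dx h = fun x t => 2 * c * (r x t * r1 x t) := by
    rw [h0]; funext x t
    refine (((d0 x t).pow 2).const_mul c).deriv.trans ?_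
    ring
  have h2 : dx (dx h) = fun x t => 2 * c * (r1 x t ^ 2 + r x t * r2 x t) := by
    rw [h1]; funext x t
    refine (((d0 x t).mul (d1 x t)).const_mul (2 * c)).deriv.trans ?_
    ring
  have h3 : dx (dx (dx h)) = fun x t => 2 * c * (3 * (r1 x t * r2 x t) + r x t * r3 x t) := by
    rw [h2]; funext x t
    refine ((((d1 x t).pow 2).add ((d0 x t).mul (d2 x t))).const_mul (2 * c)).deriv.trans ?_
    ring
  have h4 : dx (dx (dx (dx h))) = fun x t =>
      2 * c * (3 * r2 x t ^ 2 + 4 * (r1 x t * r3 x t) + r x t * r4 x t) := by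
    rw [h3]; funext x t
    refine (((((d1 x t).mul (d2 x t)).const_mul 3).add
      ((d0 x t).mul (d3 x t))).const_mul (2 * c)).deriv.trans ?_
    ring
  intro x t
  have ht : dt h x t = c * (2 * r x t * dt r x t) := by
    rw [h0]
    refine (((sr.hasDerivAt_dt x t).pow 2).const_mul c).deriv.trans ?_
    ring
  have hFx : dx F x t =
      deriv (fun y => flux (r y t) (r1 y t) (r2 y t) (r3 y t) (r4 y t)) x := by
    simp only [dx, hF, vt]
  have key := deriv_bracket_eq (r := fun y => r y t) (r1 := fun y => r1 y t)
    (r2 := fun y => r2 y t) (r3 := fun y => r3 y t) (r4 := fun y => r4 y t)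
    (r0 x t) (d0 x t) (d1 x t) (d2 x t) (d3 x t) (d4 x t)
  rw [ht, rt, hFx, h4, h3, h2, h1, h0]
  trans c * deriv (fun y => bracket (r y t) (r1 y t) (r2 y t) (r3 y t) (r4 y t)) x
  · rw [key]; ring
  · rw [← deriv_const_mul_field]
    refine congrArg (fun f : ℝ → ℝ => deriv f x) (funext fun y => ?_)
    have := r0 y t
    simp only [bracket, hβc]
    field_simp
    ring
end
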